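/- Let G be a group generated by a finite set V, acting on a compact interval I = [a,b] by orientation-preserving homeomorphisms. For x ∈ I and w ∈ G, the covering distance cd(x, w·x) with respect to the open cover 𝒱 = ⋃_{v∈V} π₀(supp v) satisfies cd(x, w·x) ≤ ‖w‖, where ‖w‖ is the syllable length of w (the minimal ℓ such that w is a product of ℓ powers of generators). -/

import Mathlib

/-- The open support of a permutation of `ℝ`. -/
def suppSet (f : Equiv.Perm ℝ) : Set ℝ := {x | f x ≠ x}

/-- The cover `𝒱`: connected components of the supports of the generators. -/
def coverFam {G : Type*} [Group G] (V : Set G) (φ : G →* Equiv.Perm ℝ) :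
    Set (Set ℝ) :=
  {C | ∃ v ∈ V, ∃ x ∈ suppSet (φ v), C = connectedComponentIn (suppSet (φ v)) x}

/-- The `𝒱`-covering length of `A`: the least number of members of `𝒱` needed to
cover `A` (with `⊤` if impossible; `0` covers `∅`). -/
noncomputable def coverLen (𝒱 : Set (Set ℝ)) (A : Set ℝ) : ℕ∞ :=
  sInf {n : ℕ∞ | ∃ F : Finset (Set ℝ), ↑F ⊆ 𝒱 ∧ (F.card : ℕ∞) = n ∧ A ⊆ ⋃₀ ↑F}

/-- The `𝒱`-covering distance between `x` and `y`. -/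
noncomputable def coverDist (𝒱 : Set (Set ℝ)) (x y : ℝ) : ℕ∞ :=
  if x = y then 0 else coverLen 𝒱 (Set.Icc (min x y) (max x y))

/-- The syllable length of `w` with respect to the generating set `V`: the least
`ℓ` such that `w = v₁^{n₁} ⋯ v_ℓ^{n_ℓ}` with each `vᵢ ∈ V`, `nᵢ ∈ ℤ`. -/
noncomputable def syllableLength {G : Type*} [Group G] (V : Set G) (w : G) : ℕ∞ :=
  sInf {n : ℕ∞ | ∃ vs : List (G × ℤ), (∀ p ∈ vs, p.1 ∈ V) ∧
    (vs.length : ℕ∞) = n ∧ w = (vs.map fun p => p.1 ^ p.2).prod}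

/-! If `f` is an increasing bijection and `f ^ n` moves `x`, then no fixed point `z` of `f` lies
between `x` and `(f ^ n) x`: it would also be fixed by the increasing map `f ^ n`, which keeps `x`
on its side of `z`. Hence the whole interval lies in one component of the support of `f`, so a
single syllable moves a point by covering distance at most `1`. The triangle inequality for the
covering distance then adds up the syllables of a word. -/

section LinearOrder

variable {α : Type*} [LinearOrder α]

theorem strictMono_perm_zpow {f : Equiv.Perm α} (hf : StrictMono f) (n : ℤ) :
    StrictMono ⇑(f ^ n) := by
  have hpow (k : ℕ) : StrictMono ⇑(f ^ k) := by
    rw [Equiv.Perm.coe_pow]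
    exact hf.iterate k
  cases n with
  | ofNat k => simpa only [Int.ofNat_eq_natCast, zpow_natCast] using hpow k
  | negSucc k =>
    intro x y hxy
    rw [zpow_negSucc, ← (hpow (k + 1)).lt_iff_lt]
    simpa only [Equiv.Perm.coe_inv, Equiv.apply_symm_apply] using hxy

theorem eq_of_isFixedPt_of_mem_uIcc {f : α → α} (hf : StrictMono f) {x z : α}
    (hz : Function.IsFixedPt f z) (hmem : z ∈ Set.uIcc x (f x)) : z = x := by
  rcases Set.mem_uIcc.1 hmem with ⟨hxz, hzfx⟩ | ⟨hfxz, hzx⟩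
  · exact (hf.le_iff_le.1 (hz.le.trans hzfx)).antisymm hxz
  · exact hzx.antisymm (hf.le_iff_le.1 (hfxz.trans hz.ge))

end LinearOrder

theorem uIcc_zpow_apply_subset_suppSet {f : Equiv.Perm ℝ} (hf : StrictMono f) {n : ℤ} {x : ℝ}
    (hx : (f ^ n) x ≠ x) : Set.uIcc x ((f ^ n) x) ⊆ suppSet f := by
  intro z hmem (hz : Function.IsFixedPt f z)
  have hzn : Function.IsFixedPt ⇑(f ^ n) z := hz.perm_zpow n
  obtain rfl : z = x := eq_of_isFixedPt_of_mem_uIcc (strictMono_perm_zpow hf n) hzn hmem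
  exact hx hzn

section Covering

variable {𝒱 : Set (Set ℝ)} {A B C : Set ℝ}

theorem coverLen_le_card {F : Finset (Set ℝ)} (hF : ↑F ⊆ 𝒱) (hA : A ⊆ ⋃₀ ↑F) :
    coverLen 𝒱 A ≤ F.card :=
  sInf_le ⟨F, hF, rfl, hA⟩

theorem coverLen_le_one_of_subset (hC : C ∈ 𝒱) (hA : A ⊆ C) : coverLen 𝒱 A ≤ 1 := by
  simpa using coverLen_le_card (F := {C}) (by simpa using hC) (by simpa using hA)

theorem coverLen_mono (hAB : A ⊆ B) : coverLen 𝒱 A ≤ coverLen 𝒱 B := by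
  refine le_sInf ?_
  rintro _ ⟨F, hF, rfl, hB⟩
  exact coverLen_le_card hF (hAB.trans hB)

theorem coverLen_union_le : coverLen 𝒱 (A ∪ B) ≤ coverLen 𝒱 A + coverLen 𝒱 B := by
  classical
  change _ ≤ sInf _ + sInf _
  rw [sInf_eq_iInf, sInf_eq_iInf]
  refine ENat.le_iInf₂_add_iInf₂ ?_
  rintro _ ⟨F, hF, rfl, hA⟩ _ ⟨E, hE, rfl, hB⟩
  calc
    coverLen 𝒱 (A ∪ B) ≤ (F ∪ E).card := by
      refine coverLen_le_card ?_ ?_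
      · simpa only [Finset.coe_union] using Set.union_subset hF hE
      · simpa only [Finset.coe_union, Set.sUnion_union] using Set.union_subset_union hA hB
    _ ≤ F.card + E.card := mod_cast Finset.card_union_le F E

theorem coverDist_self (𝒱 : Set (Set ℝ)) (x : ℝ) : coverDist 𝒱 x x = 0 :=
  if_pos rfl

theorem coverDist_of_ne {x y : ℝ} (hxy : x ≠ y) :
    coverDist 𝒱 x y = coverLen 𝒱 (Set.uIcc x y) :=
  if_neg hxy

theorem coverDist_le_coverLen_uIcc (x y : ℝ) : coverDist 𝒱 x y ≤ coverLen 𝒱 (Set.uIcc x y) := by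
  obtain rfl | hxy := eq_or_ne x y
  · simp only [coverDist_self, zero_le]
  · exact (coverDist_of_ne hxy).le

theorem coverDist_triangle (𝒱 : Set (Set ℝ)) (x y z : ℝ) :
    coverDist 𝒱 x z ≤ coverDist 𝒱 x y + coverDist 𝒱 y z := by
  obtain rfl | hxy := eq_or_ne x y
  · simp only [coverDist_self, zero_add, le_refl]
  obtain rfl | hyz := eq_or_ne y z
  · simp only [coverDist_self, add_zero, le_refl]
  calc
    coverDist 𝒱 x z ≤ coverLen 𝒱 (Set.uIcc x z) := coverDist_le_coverLen_uIcc x z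
    _ ≤ coverLen 𝒱 (Set.uIcc x y ∪ Set.uIcc y z) := coverLen_mono Set.uIcc_subset_uIcc_union_uIcc
    _ ≤ coverLen 𝒱 (Set.uIcc x y) + coverLen 𝒱 (Set.uIcc y z) := coverLen_union_le
    _ = coverDist 𝒱 x y + coverDist 𝒱 y z := by rw [coverDist_of_ne hxy, coverDist_of_ne hyz]

end Covering

section Action

variable {G : Type*} [Group G] {V : Set G} {φ : G →* Equiv.Perm ℝ}

theorem coverDist_zpow_apply_le_one {v : G} (hv : v ∈ V) (hmono : Monotone ⇑(φ v)) (n : ℤ)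
    (x : ℝ) : coverDist (coverFam V φ) x (φ (v ^ n) x) ≤ 1 := by
  rw [map_zpow]
  by_cases hx : (φ v ^ n) x = x
  · simp only [hx, coverDist_self, zero_le]
  have hsupp : Set.uIcc x ((φ v ^ n) x) ⊆ suppSet (φ v) :=
    uIcc_zpow_apply_subset_suppSet (hmono.strictMono_of_injective (φ v).injective) hx
  have hcomponent : Set.uIcc x ((φ v ^ n) x) ⊆ connectedComponentIn (suppSet (φ v)) x :=
    isPreconnected_uIcc.subset_connectedComponentIn Set.left_mem_uIcc hsupp
  exact (coverDist_le_coverLen_uIcc _ _).trans <|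
    coverLen_le_one_of_subset ⟨v, hv, x, hsupp Set.left_mem_uIcc, rfl⟩ hcomponent

theorem coverDist_list_prod_apply_le_length (hmono : ∀ v ∈ V, Monotone ⇑(φ v)) (x : ℝ)
    (vs : List (G × ℤ)) (hvs : ∀ p ∈ vs, p.1 ∈ V) :
    coverDist (coverFam V φ) x (φ (vs.map fun p => p.1 ^ p.2).prod x) ≤ vs.length := by
  induction vs with
  | nil => simp [coverDist_self]
  | cons p vs ih =>
    obtain ⟨hp, hvs⟩ := List.forall_mem_cons.1 hvs
    simp only [List.map_cons, List.prod_cons, map_mul, Equiv.Perm.mul_apply, List.length_cons,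
      Nat.cast_succ]
    exact (coverDist_triangle _ _ _ _).trans <|
      add_le_add (ih hvs) (coverDist_zpow_apply_le_one hp (hmono p.1 hp) p.2 _)

theorem coverDist_le_syllableLength_general (hmono : ∀ v ∈ V, Monotone ⇑(φ v)) (x : ℝ) (w : G) :
    coverDist (coverFam V φ) x (φ w x) ≤ syllableLength V w := by
  refine le_sInf ?_
  rintro _ ⟨vs, hvs, rfl, rfl⟩
  exact coverDist_list_prod_apply_le_length hmono x vs hvs

end Action

/-- For a group `G` generated by a finite set `V` acting on a compact interval
`I = [a,b]` by orientation-preserving homeomorphisms, the covering distance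
satisfies `cd(x, w·x) ≤ ‖w‖` for every `x ∈ I` and `w ∈ G`. -/
theorem coverDist_le_syllableLength {G : Type*} [Group G] (V : Finset G)
    (hgen : Subgroup.closure (V : Set G) = ⊤)
    (φ : G →* Equiv.Perm ℝ)
    (hmono : ∀ g : G, Monotone ⇑(φ g))
    (hcont : ∀ g : G, Continuous ⇑(φ g))
    (a b : ℝ) (hab : a ≤ b)
    (hsupp : ∀ (g : G) (x : ℝ), x ∉ Set.Icc a b → φ g x = x)
    (x : ℝ) (hx : x ∈ Set.Icc a b) (w : G) :
    coverDist (coverFam (V : Set G) φ) x (φ w x) ≤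
      syllableLength (V : Set G) w :=
  coverDist_le_syllableLength_general (fun v _ => hmono v) x w
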